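/- In the heat kernel setup, fix σ < 2 and integers a ≥ 1 and a' ≥ 1. Then there is a constant C such that for every f ∈ L^∞(μ) one has ‖P_1^{(a)} f‖_∞ ≤ C·‖f‖_{C^σ,(a')}, where ‖f‖_{C^σ,(a')} := ‖e^{−L}f‖_∞ + sup_{0<t≤1} t^{−σ/2}‖Q_t^{(a')}f‖_∞. (Proposition 2.7.) -/

import Mathlib

open MeasureTheory Metric Set
open scoped ENNReal NNReal

noncomputable section

/-- The (pointwise) supremum norm of a real-valued function, valued in `ℝ≥0∞`. -/
def supNorm {M : Type*} (g : M → ℝ) : ℝ≥0∞ := ⨆ x, (‖g x‖₊ : ℝ≥0∞)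

/-- `γ_a = ∫_0^∞ s^a e^{-s} ds/s`. -/
def gammaInt (a : ℕ) : ℝ := ∫ s in Set.Ioi (0 : ℝ), s ^ a * Real.exp (-s) / s

/-- A conservative heat kernel on a doubling metric measure space, satisfying the
Gaussian upper estimates (UE) for all time derivatives, for `0 < t ≤ 1`. -/
structure HeatKernelSetup (M : Type*) [MeasurableSpace M] [MetricSpace M] where
  μ : Measure M
  p : ℝ → M → M → ℝ
  C_D : ℝ
  C_D_pos : 0 < C_D
  doubling : ∀ (x : M) (r : ℝ), 0 < r →
    μ (Metric.ball x (2 * r)) ≤ ENNReal.ofReal C_D * μ (Metric.ball x r)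
  p_nonneg : ∀ t : ℝ, 0 < t → ∀ x y, 0 ≤ p t x y
  p_symm : ∀ t : ℝ, 0 < t → ∀ x y, p t x y = p t y x
  p_meas : ∀ t : ℝ, 0 < t → Measurable (Function.uncurry (p t))
  semigroup : ∀ s t : ℝ, 0 < s → 0 < t → ∀ x z,
    p (s + t) x z = ∫ y, p s x y * p t y z ∂μ
  conservative : ∀ t : ℝ, 0 < t → ∀ x, ∫ y, p t x y ∂μ = 1
  smooth : ∀ (x y : M) (m : ℕ) (t : ℝ), 0 < t →
    DifferentiableAt ℝ (iteratedDeriv m (fun s => p s x y)) t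
  diff_under_int : ∀ (f : M → ℝ), Measurable f → supNorm f < ⊤ →
    ∀ (m : ℕ) (x : M) (t : ℝ), 0 < t →
      iteratedDeriv m (fun s => ∫ y, p s x y * f y ∂μ) t
        = ∫ y, iteratedDeriv m (fun s => p s x y) t * f y ∂μ
  UE : ∀ m : ℕ, ∃ C, 0 < C ∧ ∃ c, 0 < c ∧ ∀ t : ℝ, 0 < t → t ≤ 1 → ∀ x y,
    |t ^ m * iteratedDeriv m (fun s => p s x y) t|
      ≤ C / Real.sqrt ((μ (Metric.ball x (Real.sqrt t))).toReal
            * (μ (Metric.ball y (Real.sqrt t))).toReal)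
          * Real.exp (-c * dist x y ^ 2 / t)

namespace HeatKernelSetup

variable {M : Type*} [MeasurableSpace M] [MetricSpace M] (H : HeatKernelSetup M)

/-- The semigroup `e^{-tL}` applied to `f`. -/
def S (t : ℝ) (f : M → ℝ) (x : M) : ℝ := ∫ y, H.p t x y * f y ∂H.μ

/-- `Q_t^{(a)} f = (-1)^a t^a ∂_t^a (e^{-tL} f)`. -/
def Q (a : ℕ) (t : ℝ) (f : M → ℝ) (x : M) : ℝ :=
  (-1 : ℝ) ^ a * t ^ a * iteratedDeriv a (fun s => H.S s f x) t

/-- `P_t^{(a)} f = ∑_{k<a} c_{a,k} (-1)^k t^k ∂_t^k (e^{-tL} f)`, where the coefficients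
`c_{a,k} = 1/k!` are determined by `φ_a(x) = (∑_k c_{a,k} x^k) e^{-x}`. -/
def P (a : ℕ) (t : ℝ) (f : M → ℝ) (x : M) : ℝ :=
  ∑ k ∈ Finset.range a, ((Nat.factorial k : ℝ))⁻¹ * (-1 : ℝ) ^ k * t ^ k *
    iteratedDeriv k (fun s => H.S s f x) t

/-- `(tL)P_t^{(a)} f = ∑_{k<a} c_{a,k} (-1)^{k+1} t^{k+1} ∂_t^{k+1} (e^{-tL} f)`. -/
def LP (a : ℕ) (t : ℝ) (f : M → ℝ) (x : M) : ℝ :=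
  ∑ k ∈ Finset.range a, ((Nat.factorial k : ℝ))⁻¹ * (-1 : ℝ) ^ (k + 1) * t ^ (k + 1) *
    iteratedDeriv (k + 1) (fun s => H.S s f x) t

/-- The Hölder norm `‖f‖_{C^σ,(a)} = ‖e^{-L} f‖_∞ + sup_{0<t≤1} t^{-σ/2} ‖Q_t^{(a)} f‖_∞`. -/
def CNorm (a : ℕ) (σ : ℝ) (f : M → ℝ) : ℝ≥0∞ :=
  supNorm (H.S 1 f) +
    ⨆ t ∈ Set.Ioc (0 : ℝ) 1, ENNReal.ofReal (t ^ (-σ / 2)) * supNorm (H.Q a t f)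

/-- The integrand of the paraproduct `Π_g^{(b)}(f)` at frequency scale `t`:
`(tL)P_t^{(b)}( Q_t^{(b-1)} f · P_t^{(b)} g ) + Q_t^{(b-1)}( (tL)P_t^{(b)} f · P_t^{(b)} g )`. -/
def paraInner (b : ℕ) (g f : M → ℝ) (t : ℝ) : M → ℝ := fun y =>
  H.LP b t (fun z => H.Q (b - 1) t f z * H.P b t g z) y
    + H.Q (b - 1) t (fun z => H.LP b t f z * H.P b t g z) y

/-- `Q_s^{(a)} Π_g^{(b)}(f)`, defined by applying `Q_s^{(a)}` under the time integral. -/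
def paraQ (b a : ℕ) (g f : M → ℝ) (s : ℝ) : M → ℝ := fun x =>
  (gammaInt b)⁻¹ * ∫ t in Set.Ioc (0 : ℝ) 1, H.Q a s (H.paraInner b g f t) x / t

/-- `e^{-L} Π_g^{(b)}(f)`, defined by applying `e^{-L}` under the time integral. -/
def paraS (b : ℕ) (g f : M → ℝ) : M → ℝ := fun x =>
  (gammaInt b)⁻¹ * ∫ t in Set.Ioc (0 : ℝ) 1, H.S 1 (H.paraInner b g f t) x / t

/-- The paraproduct `Π_g^{(b)}(f)` as a function, when the integral converges. -/
def paraFn (b : ℕ) (g f : M → ℝ) : M → ℝ := fun x =>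
  (gammaInt b)⁻¹ * ∫ t in Set.Ioc (0 : ℝ) 1, H.paraInner b g f t x / t

/-- The resolution operator `R(v)_t = ∫_0^t P_{t-s}^{(b)} v(s) ds`. -/
def resolve (b : ℕ) (v : ℝ → M → ℝ) (t : ℝ) : M → ℝ := fun x =>
  ∫ s in Set.Ioc (0 : ℝ) t, H.P b (t - s) (v s) x

end HeatKernelSetup

namespace HeatKernelSetup

/-- Time derivatives of the kernel. -/
def Dk {M : Type*} [MeasurableSpace M] [MetricSpace M] (H : HeatKernelSetup M)
    (k : ℕ) (t : ℝ) (x y : M) : ℝ := iteratedDeriv k (fun s => H.p s x y) t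

/-- Integral operators with the differentiated kernels. -/
def W {M : Type*} [MeasurableSpace M] [MetricSpace M] (H : HeatKernelSetup M)
    (k : ℕ) (t : ℝ) (g : M → ℝ) (x : M) : ℝ := ∫ y, H.Dk k t x y * g y ∂H.μ

end HeatKernelSetup

/-- If `w k` is a chain of derivatives on an open set starting at `v`, it computes the iterated
derivatives of `v`. -/
lemma hk_iter_eq {v : ℝ → ℝ} {w : ℕ → ℝ → ℝ} {I : Set ℝ} (hI : IsOpen I)
    (h0 : ∀ s ∈ I, v s = w 0 s) (hw : ∀ k, ∀ s ∈ I, HasDerivAt (w k) (w (k + 1) s) s) :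
    ∀ k, ∀ s ∈ I, iteratedDeriv k v s = w k s := by
  intro k
  induction k with
  | zero => intro s hs; simpa using h0 s hs
  | succ k ih =>
    intro s hs
    rw [iteratedDeriv_succ]
    have : iteratedDeriv k v =ᶠ[nhds s] w k := by
      filter_upwards [hI.mem_nhds hs] with r hr using ih r hr
    rw [this.deriv_eq]
    exact (hw k s hs).deriv

lemma hk_point (m : ℕ) : ∀ l : ℝ, 0 < l → ∃ C, 0 ≤ C ∧ ∀ (u : ℝ → ℝ) (A : ℝ),
    (∀ k, ∀ t, 0 < t → DifferentiableAt ℝ (iteratedDeriv k u) t) → ∀ b, 0 < b →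
    (∀ t ∈ Icc b (b + l), |u t| ≤ A) → ∃ ξ ∈ Icc b (b + l), |iteratedDeriv m u ξ| ≤ C * A := by
  induction m with
  | zero =>
    intro l hl
    refine ⟨1, zero_le_one, fun u A _ b hb h => ⟨b, ⟨le_rfl, by linarith⟩, ?_⟩⟩
    simpa using h b ⟨le_rfl, by linarith⟩
  | succ m ih =>
    intro l hl
    obtain ⟨C, hC, h⟩ := ih (l / 3) (by positivity)
    refine ⟨2 * C / (l / 3), by positivity, fun u A hu b hb hA => ?_⟩
    obtain ⟨x, hx, hx'⟩ := h u A hu b hb (fun t ht => hA t ⟨ht.1, by linarith [ht.2]⟩)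
    obtain ⟨y, hy, hy'⟩ := h u A hu (b + 2 * l / 3) (by positivity)
      (fun t ht => hA t ⟨by linarith [ht.1], by linarith [ht.2]⟩)
    have hxy : x < y := by linarith [hx.2, hy.1]
    obtain ⟨z, hz, hz'⟩ := exists_deriv_eq_slope (iteratedDeriv m u) hxy
      (fun t ht => (hu m t (by linarith [ht.1, hx.1])).continuousAt.continuousWithinAt)
      (fun t ht => (hu m t (by linarith [ht.1, hx.1])).differentiableWithinAt)
    refine ⟨z, ⟨by linarith [hz.1, hx.1], by linarith [hz.2, hy.2]⟩, ?_⟩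
    rw [iteratedDeriv_succ, hz', abs_div]
    have h1 : |iteratedDeriv m u y - iteratedDeriv m u x| ≤ 2 * C * A := by
      have := abs_sub (iteratedDeriv m u y) (iteratedDeriv m u x)
      linarith
    have h2 : l / 3 ≤ |y - x| := by
      rw [abs_of_pos (by linarith)]; linarith [hx.2, hy.1]
    have h3 : 0 ≤ 2 * C * A := le_trans (abs_nonneg _) h1
    calc _ ≤ 2 * C * A / (l / 3) := by gcongr
      _ = _ := by ring

/-- Landau type inequality on `[1,2]`. -/
lemma hk_landau (n : ℕ) : ∃ C, 0 ≤ C ∧ ∀ (u : ℝ → ℝ) (A B : ℝ), 0 ≤ A → 0 ≤ B →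
    (∀ k, ∀ t, 0 < t → DifferentiableAt ℝ (iteratedDeriv k u) t) →
    (∀ t ∈ Icc (1 : ℝ) 2, |u t| ≤ A) → (∀ t ∈ Icc (1 : ℝ) 2, |iteratedDeriv n u t| ≤ B) →
    ∀ k ≤ n, ∀ t ∈ Icc (1 : ℝ) 2, |iteratedDeriv k u t| ≤ C * (A + B) := by
  induction n with
  | zero =>
    refine ⟨1, zero_le_one, fun u A B hA hB hu h1 h2 k hk t ht => ?_⟩
    obtain rfl : k = 0 := by omega
    linarith [h2 t ht]
  | succ n ih =>
    obtain ⟨C, hC, h⟩ := ih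
    obtain ⟨K, hK, h'⟩ := hk_point n 1 one_pos
    refine ⟨1 + C * (1 + K + 1), by positivity, fun u A B hA hB hu h1 h2 k hk t ht => ?_⟩
    obtain ⟨ξ, hξ, hξ'⟩ := h' u A hu 1 one_pos (fun t ht => h1 t ⟨ht.1, by linarith [ht.2]⟩)
    have hξ2 : ξ ∈ Icc (1 : ℝ) 2 := ⟨hξ.1, by linarith [hξ.2]⟩
    have hn : ∀ t ∈ Icc (1 : ℝ) 2, |iteratedDeriv n u t| ≤ K * A + B := by
      intro t ht
      have := Convex.norm_image_sub_le_of_norm_deriv_le (f := iteratedDeriv n u) (C := B)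
        (fun s hs => hu n s (by linarith [hs.1]))
        (fun s hs => by rw [← iteratedDeriv_succ]; exact h2 s hs) (convex_Icc (1 : ℝ) 2) hξ2 ht
      rw [Real.norm_eq_abs, Real.norm_eq_abs] at this
      have h3 : |t - ξ| ≤ 1 := by
        rw [abs_le]; constructor <;> linarith [ht.1, ht.2, hξ2.1, hξ2.2]
      have h4 : |iteratedDeriv n u t| ≤ |iteratedDeriv n u ξ| +
          |iteratedDeriv n u t - iteratedDeriv n u ξ| := by
        have := abs_add_le (iteratedDeriv n u ξ) (iteratedDeriv n u t - iteratedDeriv n u ξ)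
        simpa using this
      nlinarith
    rcases Nat.lt_or_ge n k with hk' | hk'
    · obtain rfl : k = n + 1 := by omega
      have : 0 ≤ C * (1 + K + 1) * (A + B) := by positivity
      nlinarith [h2 t ht]
    · have := h u A (K * A + B) hA (by positivity) hu h1 hn k hk' t ht
      have h5 : C * (A + (K * A + B)) ≤ C * ((1 + K + 1) * (A + B)) := by
        gcongr
        nlinarith [mul_nonneg hK hB]
      nlinarith

lemma hk_summable (D c : ℝ) (hD : 1 ≤ D) (hc : 0 < c) :
    Summable (fun n : ℕ => D ^ n * Real.exp (-c * (n : ℝ) ^ 2)) := by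
  have h0 : Summable (fun n : ℕ => Real.exp ((Real.log D + 1) ^ 2 / (4 * c)) *
      Real.exp (-(n : ℝ))) := (Real.summable_exp_neg_nat).mul_left _
  refine Summable.of_nonneg_of_le (fun n => by positivity) (fun n => ?_) h0
  have hD' : 0 < D := by linarith
  rw [← Real.exp_add]
  nth_rewrite 1 [← Real.exp_log hD']
  rw [← Real.exp_nat_mul, ← Real.exp_add, Real.exp_le_exp]
  have : (n * Real.log D + -c * (n : ℝ) ^ 2 + n) ≤ (Real.log D + 1) ^ 2 / (4 * c) := by
    rw [le_div_iff₀ (by positivity)]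
    nlinarith [sq_nonneg (Real.log D + 1 - 2 * c * n)]
  linarith

namespace HeatKernelSetup

variable {M : Type*} [MeasurableSpace M] [MetricSpace M] (H : HeatKernelSetup M)

lemma integrable_p {t : ℝ} (ht : 0 < t) (x : M) : Integrable (H.p t x) H.μ := by
  by_contra h
  have := integral_undef h
  rw [H.conservative t ht x] at this
  norm_num at this

lemma ball_toReal_pos_of_le (x : M) {r : ℝ} (hr : 0 < r) (hr1 : r ≤ 1) :
    0 < (H.μ (ball x r)).toReal := by
  by_contra h
  have h0 : (H.μ (ball x r)).toReal = 0 := le_antisymm (not_lt.1 h) ENNReal.toReal_nonneg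
  obtain ⟨C, hC, c, hc, hb⟩ := H.UE 0
  have hp : ∀ y, H.p (r ^ 2) x y = 0 := by
    intro y
    have := hb (r ^ 2) (by positivity) (by nlinarith) x y
    rw [Real.sqrt_sq hr.le, h0] at this
    simpa using this
  have := H.conservative (r ^ 2) (by positivity) x
  simp [hp] at this

/-- A doubling constant that is at least one. -/
def DD : ℝ := max H.C_D 1

lemma one_le_DD : 1 ≤ H.DD := le_max_right _ _

lemma doubling_iter (x : M) {r : ℝ} (hr : 0 < r) (j : ℕ) :
    H.μ (ball x (2 ^ j * r)) ≤ ENNReal.ofReal (H.DD ^ j) * H.μ (ball x r) := by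
  induction j with
  | zero => simp
  | succ j ih =>
    have h1 := H.doubling x (2 ^ j * r) (by positivity)
    rw [← mul_assoc, ← pow_succ'] at h1
    have hD : (0 : ℝ) ≤ H.DD := zero_le_one.trans H.one_le_DD
    calc _ ≤ _ := h1
      _ ≤ ENNReal.ofReal H.DD * (ENNReal.ofReal (H.DD ^ j) * H.μ (ball x r)) := by
        gcongr
        exact le_max_left _ _
      _ = _ := by rw [pow_succ', ENNReal.ofReal_mul hD, mul_assoc]

lemma ball_ne_top (x : M) (r : ℝ) : H.μ (ball x r) ≠ ⊤ := by
  have h1 : H.μ (ball x 1) ≠ ⊤ := by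
    intro h
    have := H.ball_toReal_pos_of_le x one_pos le_rfl
    simp [h] at this
  obtain ⟨j, hj⟩ := pow_unbounded_of_one_lt r (one_lt_two)
  have h2 := H.doubling_iter x one_pos j
  refine ne_top_of_le_ne_top (ENNReal.mul_ne_top ENNReal.ofReal_ne_top h1) ((measure_mono ?_).trans h2)
  exact ball_subset_ball (by linarith)

lemma ball_toReal_pos (x : M) {r : ℝ} (hr : 0 < r) : 0 < (H.μ (ball x r)).toReal := by
  refine (H.ball_toReal_pos_of_le x (r := min r 1) (by positivity) (min_le_right _ _)).trans_le ?_
  exact ENNReal.toReal_mono (H.ball_ne_top x r) (measure_mono (ball_subset_ball (min_le_left _ _)))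

lemma doubling_iter_real (x : M) {r : ℝ} (hr : 0 < r) (j : ℕ) :
    (H.μ (ball x (2 ^ j * r))).toReal ≤ H.DD ^ j * (H.μ (ball x r)).toReal := by
  have := ENNReal.toReal_mono
    (ENNReal.mul_ne_top ENNReal.ofReal_ne_top (H.ball_ne_top x r)) (H.doubling_iter x hr j)
  rwa [ENNReal.toReal_mul, ENNReal.toReal_ofReal
    (pow_nonneg (zero_le_one.trans H.one_le_DD) j)] at this

lemma sigmaFinite : SigmaFinite H.μ := by
  rcases isEmpty_or_nonempty M with h | ⟨⟨x⟩⟩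
  · rw [Measure.eq_zero_of_isEmpty H.μ]; infer_instance
  · refine ⟨⟨⟨fun n => ball x n, fun _ => trivial, fun n => (H.ball_ne_top x n).lt_top, ?_⟩⟩⟩
    exact iUnion_ball_nat x

lemma hasDerivAt_Dk (k : ℕ) {t : ℝ} (ht : 0 < t) (x y : M) :
    HasDerivAt (fun s => H.Dk k s x y) (H.Dk (k + 1) t x y) t := by
  have := (H.smooth x y k t ht).hasDerivAt
  unfold Dk
  rwa [iteratedDeriv_succ]

/-- sequence version of derivative. -/
lemma tendsto_slope {f : ℝ → ℝ} {f' t : ℝ} (h : HasDerivAt f f' t) :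
    Filter.Tendsto (fun n : ℕ => ((n : ℝ) + 1) * (f (t + 1 / ((n : ℝ) + 1)) - f t))
      Filter.atTop (nhds f') := by
  have h1 := h.tendsto_slope_zero
  have h2 : Filter.Tendsto (fun n : ℕ => 1 / ((n : ℝ) + 1)) Filter.atTop (nhdsWithin 0 {0}ᶜ) := by
    refine tendsto_nhdsWithin_iff.2 ⟨tendsto_one_div_add_atTop_nhds_zero_nat, ?_⟩
    filter_upwards with n
    have : (0 : ℝ) < 1 / ((n : ℝ) + 1) := by positivity
    exact this.ne'
  have h3 := h1.comp h2
  refine h3.congr fun n => ?_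
  simp

lemma measurable_Dk (k : ℕ) : ∀ {t : ℝ}, 0 < t →
    Measurable (Function.uncurry (H.Dk k t)) := by
  induction k with
  | zero =>
    intro t ht
    have : H.Dk 0 t = H.p t := by ext x y; simp [Dk]
    rw [this]
    exact H.p_meas t ht
  | succ k ih =>
    intro t ht
    refine measurable_of_tendsto_metrizable (f := fun (n : ℕ) (z : M × M) =>
      ((n : ℝ) + 1) * (H.Dk k (t + 1 / ((n : ℝ) + 1)) z.1 z.2 - H.Dk k t z.1 z.2)) ?_ ?_
    · intro n
      exact measurable_const.mul ((ih (t := t + 1 / ((n : ℝ) + 1)) (by positivity)).sub (ih ht))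
    · rw [tendsto_pi_nhds]
      intro z
      exact tendsto_slope (H.hasDerivAt_Dk k ht z.1 z.2)

lemma measurable_Dk_right (k : ℕ) {t : ℝ} (ht : 0 < t) (x : M) : Measurable (H.Dk k t x) :=
  (H.measurable_Dk k ht).comp measurable_prodMk_left

lemma dom (m : ℕ) {δ : ℝ} (hδ : 0 < δ) : ∃ K, 0 ≤ K ∧ ∀ x, ∃ F : M → ℝ,
    Integrable F H.μ ∧ ∫ y, F y ∂H.μ ≤ K ∧
      ∀ t, δ ≤ t → t ≤ 1 → ∀ y, |H.Dk m t x y| ≤ F y := by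
  obtain ⟨C, hC, c, hc, hb⟩ := H.UE m
  obtain ⟨j0, hj0⟩ := pow_unbounded_of_one_lt (2 / √δ) (one_lt_two)
  have hsδ : 0 < √δ := Real.sqrt_pos.2 hδ
  rw [div_lt_iff₀ hsδ] at hj0
  set D := H.DD with hDdef
  have hD1 : 1 ≤ D := H.one_le_DD
  set K0 : ℝ := C * D ^ j0 / δ ^ m with hK0
  have hK0p : 0 ≤ K0 := by positivity
  set b : ℕ → ℝ := fun n => K0 * (D ^ n * Real.exp (-c * (n : ℝ) ^ 2)) with hbdef
  have hbn : ∀ n, 0 ≤ b n := fun n => by positivity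
  have hbs : Summable b := (hk_summable D c hD1 hc).mul_left K0
  refine ⟨∑' n, b n, tsum_nonneg hbn, fun x => ?_⟩
  set V : ℕ → ℝ := fun n => (H.μ (ball x ((n : ℝ) + 1))).toReal with hV
  have hVp : ∀ n, 0 < V n := fun n => H.ball_toReal_pos x (by positivity)
  have hV0 : ∀ n, V 0 ≤ V n := fun n => ENNReal.toReal_mono (H.ball_ne_top _ _)
    (measure_mono (ball_subset_ball (by simp)))
  have hVs : Summable (fun n => b n / V n) := by
    refine Summable.of_nonneg_of_le (fun n => div_nonneg (hbn n) (hVp n).le) (fun n => ?_)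
      (hbs.div_const (V 0))
    exact div_le_div_of_nonneg_left (hbn n) (hVp 0) (hV0 n)
  set T : ℕ → Set M := fun n => toMeasurable H.μ (ball x ((n : ℝ) + 1)) with hT
  have hTm : ∀ n, MeasurableSet (T n) := fun n => measurableSet_toMeasurable _ _
  set g : ℕ → M → ℝ≥0∞ := fun n => (T n).indicator (fun _ => ENNReal.ofReal (b n / V n)) with hg
  have hgm : ∀ n, Measurable (g n) := fun n => measurable_const.indicator (hTm n)
  set G : M → ℝ≥0∞ := fun y => ∑' n, g n y with hG
  have hGm : Measurable G := Measurable.tsum hgm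
  have hGfin : ∀ y, G y ≠ ⊤ := by
    intro y
    refine ne_top_of_le_ne_top hVs.tsum_ofReal_ne_top (ENNReal.tsum_le_tsum fun n => ?_)
    exact Set.indicator_le_self' (fun _ _ => zero_le) y
  have hGint : ∫⁻ y, G y ∂H.μ = ENNReal.ofReal (∑' n, b n) := by
    rw [lintegral_tsum (fun n => (hgm n).aemeasurable), ENNReal.ofReal_tsum_of_nonneg hbn hbs]
    congr 1
    ext n
    rw [lintegral_indicator_const (hTm n), measure_toMeasurable,
      ← ENNReal.ofReal_toReal (H.ball_ne_top x ((n : ℝ) + 1)), ← ENNReal.ofReal_mul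
      (div_nonneg (hbn n) (hVp n).le)]
    congr 1
    exact div_mul_cancel₀ _ (hVp n).ne'
  refine ⟨fun y => (G y).toReal, ?_, ?_, ?_⟩
  · exact integrable_toReal_of_lintegral_ne_top hGm.aemeasurable (by rw [hGint]; exact ENNReal.ofReal_ne_top)
  · rw [integral_toReal hGm.aemeasurable (by filter_upwards with y using (hGfin y).lt_top), hGint,
      ENNReal.toReal_ofReal (tsum_nonneg hbn)]
  · intro t hδt ht1 y
    have ht : 0 < t := hδ.trans_le hδt
    set n := ⌊dist x y⌋₊ with hn
    have hn1 : (n : ℝ) ≤ dist x y := Nat.floor_le dist_nonneg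
    have hn2 : dist x y < n + 1 := Nat.lt_floor_add_one _
    have hyT : y ∈ T n := subset_toMeasurable _ _ (by rw [mem_ball, dist_comm]; exact hn2)
    have hle : b n / V n ≤ (G y).toReal := by
      rw [← ENNReal.ofReal_le_iff_le_toReal (hGfin y)]
      have := ENNReal.le_tsum (f := fun n => g n y) n
      simpa [hg, hyT] using this
    refine le_trans ?_ hle
    have hgrow : ∀ z, dist x z < n + 1 →
        V n / D ^ (j0 + n) ≤ (H.μ (ball z (√t))).toReal := by
      intro z hz
      rw [div_le_iff₀ (by positivity), mul_comm]
      have h2n : ((n : ℝ) + 1) ≤ 2 ^ n := by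
        have : n + 1 ≤ 2 ^ n := Nat.lt_two_pow_self
        exact_mod_cast this
      have hrad : 2 * ((n : ℝ) + 1) ≤ 2 ^ (j0 + n) * √t := by
        have : √δ ≤ √t := Real.sqrt_le_sqrt hδt
        calc 2 * ((n : ℝ) + 1) ≤ (2 ^ j0 * √t) * 2 ^ n := by
              gcongr
              nlinarith [pow_pos (two_pos : (0 : ℝ) < 2) j0]
          _ = _ := by ring
      refine le_trans ?_ (H.doubling_iter_real z (Real.sqrt_pos.2 ht) (j0 + n))
      refine ENNReal.toReal_mono (H.ball_ne_top _ _) (measure_mono ?_)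
      refine ball_subset_ball' ?_
      linarith
    have hx := hgrow x (by simp; positivity)
    have hy := hgrow y hn2
    set q := V n / D ^ (j0 + n) with hq
    have hqp : 0 < q := by have := hVp n; positivity
    have hsq : q ≤ √((H.μ (ball x (√t))).toReal * (H.μ (ball y (√t))).toReal) := by
      apply Real.le_sqrt_of_sq_le
      rw [sq]
      gcongr
    have h1 := hb t ht ht1 x y
    rw [abs_mul, abs_of_pos (pow_pos ht m)] at h1
    have hexp : Real.exp (-c * dist x y ^ 2 / t) ≤ Real.exp (-c * (n : ℝ) ^ 2) := by
      rw [Real.exp_le_exp, div_le_iff₀ ht]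
      have : (n : ℝ) ^ 2 ≤ dist x y ^ 2 := by gcongr
      nlinarith [mul_nonneg hc.le (sq_nonneg (n : ℝ))]
    have h2 : t ^ m * |H.Dk m t x y| ≤ C / q * Real.exp (-c * (n : ℝ) ^ 2) := by
      refine h1.trans ?_
      gcongr
    have h3 : δ ^ m * |H.Dk m t x y| ≤ C / q * Real.exp (-c * (n : ℝ) ^ 2) := by
      refine le_trans ?_ h2
      gcongr
    rw [← le_div_iff₀' (by positivity)] at h3
    refine h3.trans (le_of_eq ?_)
    have := (hVp n).ne'
    simp only [hbdef, hK0, hq, pow_add]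
    field_simp

end HeatKernelSetup

namespace HeatKernelSetup

variable {M : Type*} [MeasurableSpace M] [MetricSpace M] (H : HeatKernelSetup M)

lemma Dk_zero (t : ℝ) (x y : M) : H.Dk 0 t x y = H.p t x y := by simp [Dk]

lemma W_zero (t : ℝ) (g : M → ℝ) (x : M) : H.W 0 t g x = H.S t g x := by
  simp [W, S, Dk_zero]

lemma measurable_W (k : ℕ) {t : ℝ} (ht : 0 < t) {g : M → ℝ} (hg : Measurable g) :
    Measurable (H.W k t g) := by
  have := H.sigmaFinite
  have h : Measurable (fun z : M × M => H.Dk k t z.1 z.2 * g z.2) :=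
    (H.measurable_Dk k ht).mul (hg.comp measurable_snd)
  exact (h.stronglyMeasurable.integral_prod_right (ν := H.μ)).measurable

lemma measurable_S {t : ℝ} (ht : 0 < t) {g : M → ℝ} (hg : Measurable g) :
    Measurable (H.S t g) := by
  have : H.S t g = H.W 0 t g := by ext x; rw [W_zero]
  rw [this]; exact H.measurable_W 0 ht hg

lemma integrable_p_mul {t : ℝ} (ht : 0 < t) (x : M) {g : M → ℝ} (hg : Measurable g) {A : ℝ}
    (hA : ∀ y, |g y| ≤ A) : Integrable (fun y => H.p t x y * g y) H.μ := by
  refine ((H.integrable_p ht x).mul_const A).mono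
    ((H.integrable_p ht x).aestronglyMeasurable.mul hg.aestronglyMeasurable) ?_
  filter_upwards with y
  have hA0 : 0 ≤ A := (abs_nonneg _).trans (hA y)
  rw [norm_mul, norm_mul, Real.norm_eq_abs (g y), Real.norm_eq_abs A, abs_of_nonneg hA0]
  gcongr
  exact hA y

lemma abs_S_le {t : ℝ} (ht : 0 < t) {g : M → ℝ} {A : ℝ}
    (hA : ∀ y, |g y| ≤ A) (x : M) : |H.S t g x| ≤ A := by
  have h := norm_integral_le_of_norm_le (μ := H.μ) (f := fun y => H.p t x y * g y)
    ((H.integrable_p ht x).mul_const A) (by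
      filter_upwards with y
      rw [norm_mul, Real.norm_eq_abs, Real.norm_eq_abs, abs_of_nonneg (H.p_nonneg t ht x y)]
      exact mul_le_mul_of_nonneg_left (hA y) (H.p_nonneg t ht x y))
  rw [integral_mul_const, H.conservative t ht x, one_mul] at h
  exact h

lemma W_bound (m : ℕ) {δ : ℝ} (hδ : 0 < δ) : ∃ K, 0 ≤ K ∧
    ∀ (g : M → ℝ) (A : ℝ), (∀ y, |g y| ≤ A) → ∀ t, δ ≤ t → t ≤ 1 → ∀ x,
      |H.W m t g x| ≤ K * A := by
  obtain ⟨K, hK, h⟩ := H.dom m hδ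
  refine ⟨K, hK, fun g A hA t hδt ht1 x => ?_⟩
  obtain ⟨F, hF, hFK, hb⟩ := h x
  have hA0 : 0 ≤ A := (abs_nonneg _).trans (hA x)
  have h1 := norm_integral_le_of_norm_le (μ := H.μ) (f := fun y => H.Dk m t x y * g y)
    (hF.mul_const A) (by
      filter_upwards with y
      rw [norm_mul, Real.norm_eq_abs, Real.norm_eq_abs]
      exact mul_le_mul (hb t hδt ht1 y) (hA y) (abs_nonneg _)
        ((abs_nonneg _).trans (hb t hδt ht1 y)))
  rw [integral_mul_const] at h1
  refine h1.trans ?_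
  gcongr

lemma hasDerivAt_W (m : ℕ) {g : M → ℝ} (hg : Measurable g) {A : ℝ} (hA : ∀ y, |g y| ≤ A)
    {s : ℝ} (hs : s ∈ Ioo (0 : ℝ) 1) (x : M) :
    HasDerivAt (fun r => H.W m r g x) (H.W (m + 1) s g x) s := by
  have hs2 : 0 < s / 2 := by linarith [hs.1]
  obtain ⟨K, hK, h⟩ := H.dom (m + 1) hs2
  obtain ⟨F, hF, hFK, hb⟩ := h x
  obtain ⟨K', hK', h'⟩ := H.dom m hs2
  obtain ⟨F', hF', hFK', hb'⟩ := h' x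
  have hmeas : ∀ k r, 0 < r → AEStronglyMeasurable (fun y => H.Dk k r x y * g y) H.μ :=
    fun k r hr => ((H.measurable_Dk_right k hr x).mul hg).aestronglyMeasurable
  refine (hasDerivAt_integral_of_dominated_loc_of_deriv_le (μ := H.μ)
    (F := fun r y => H.Dk m r x y * g y) (F' := fun r y => H.Dk (m + 1) r x y * g y)
    (s := Ioo (s / 2) 1) (bound := fun y => F y * A)
    (Ioo_mem_nhds (by linarith [hs.1]) hs.2) ?_ ?_ (hmeas _ _ hs.1) ?_ (hF.mul_const A) ?_).2
  · filter_upwards [Ioi_mem_nhds hs.1] with r hr using hmeas m r hr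
  · refine (hF'.mul_const A).mono' (hmeas _ _ hs.1) ?_
    filter_upwards with y
    have := hb' s (by linarith [hs.1]) hs.2.le y
    rw [norm_mul, Real.norm_eq_abs, Real.norm_eq_abs]
    exact mul_le_mul this (hA y) (abs_nonneg _) ((abs_nonneg _).trans this)
  · filter_upwards with y r hr
    have := hb r hr.1.le hr.2.le y
    rw [norm_mul, Real.norm_eq_abs, Real.norm_eq_abs]
    exact mul_le_mul this (hA y) (abs_nonneg _) ((abs_nonneg _).trans this)
  · filter_upwards with y r hr
    exact (H.hasDerivAt_Dk m (hs2.trans hr.1) x y).mul_const _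

lemma S_add {s t : ℝ} (hs : 0 < s) (ht : 0 < t) {f : M → ℝ} (hf : Measurable f) {A : ℝ}
    (hA : ∀ y, |f y| ≤ A) (x : M) : H.S (s + t) f x = H.S s (H.S t f) x := by
  have := H.sigmaFinite
  have hA0 : 0 ≤ A := (abs_nonneg _).trans (hA x)
  have hm : Measurable (fun z : M × M => H.p s x z.1 * (H.p t z.1 z.2 * f z.2)) := by
    have h1 : Measurable (fun z : M × M => H.p s x z.1) :=
      ((H.p_meas s hs).comp measurable_prodMk_left).comp measurable_fst
    exact h1.mul ((H.p_meas t ht).mul (hf.comp measurable_snd))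
  have hFub : Integrable (fun z : M × M => H.p s x z.1 * (H.p t z.1 z.2 * f z.2))
      (H.μ.prod H.μ) := by
    rw [integrable_prod_iff hm.aestronglyMeasurable]
    constructor
    · filter_upwards with y
      exact (H.integrable_p_mul ht y hf hA).const_mul _
    · refine ((H.integrable_p hs x).mul_const A).mono'
        (hm.norm.stronglyMeasurable.integral_prod_right (ν := H.μ)).aestronglyMeasurable ?_
      filter_upwards with y
      have h0 : ∀ z, ‖H.p s x y * (H.p t y z * f z)‖ = H.p s x y * (H.p t y z * |f z|) := by
        intro z
        rw [norm_mul, norm_mul, Real.norm_eq_abs, Real.norm_eq_abs, Real.norm_eq_abs,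
          abs_of_nonneg (H.p_nonneg s hs x y), abs_of_nonneg (H.p_nonneg t ht y z)]
      have h1 : ∫ z, ‖H.p s x y * (H.p t y z * f z)‖ ∂H.μ = H.p s x y * H.S t (fun z => |f z|) y := by
        simp_rw [h0]
        rw [integral_const_mul]; rfl
      show ‖∫ z, ‖H.p s x y * (H.p t y z * f z)‖ ∂H.μ‖ ≤ _
      rw [h1, norm_mul, Real.norm_eq_abs, Real.norm_eq_abs, abs_of_nonneg (H.p_nonneg s hs x y)]
      exact mul_le_mul_of_nonneg_left
        (H.abs_S_le ht (fun z => by rw [abs_abs]; exact hA z) y) (H.p_nonneg s hs x y)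
  have h2 := integral_integral_swap (μ := H.μ) (ν := H.μ)
    (f := fun y z => H.p s x y * (H.p t y z * f z)) hFub
  unfold S
  simp_rw [integral_const_mul] at h2
  rw [h2]
  congr 1
  ext z
  rw [H.semigroup s t hs ht x z, ← integral_mul_const]
  congr 1
  ext y
  ring

/-- Iterated time derivatives of the semigroup. -/
def U (k : ℕ) (t : ℝ) (f : M → ℝ) (x : M) : ℝ := iteratedDeriv k (fun s => H.S s f x) t

lemma U_eq_W (k : ℕ) {f : M → ℝ} (hf : Measurable f) {A : ℝ} (hA : ∀ y, |f y| ≤ A)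
    {r s : ℝ} (hr : 0 < r) (hs : s ∈ Ioo (0 : ℝ) 1) (x : M) :
    H.U k (r + s) f x = H.W k s (H.S r f) x := by
  have h1 := hk_iter_eq (v := fun s => H.S (r + s) f x) (w := fun k s => H.W k s (H.S r f) x)
    (I := Ioo (0 : ℝ) 1) isOpen_Ioo
    (fun s hs => by
      simp only [W_zero]
      rw [add_comm, H.S_add hs.1 hr hf hA])
    (fun k s hs => H.hasDerivAt_W k (H.measurable_S hr hf) (H.abs_S_le hr hA) hs x) k s hs
  rw [← h1]
  have := congrFun (iteratedDeriv_comp_const_add k (fun s => H.S s f x) r) s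
  exact this.symm

lemma exists_split {t : ℝ} (ht : 0 < t) : ∃ r s, 0 < r ∧ s ∈ Ioo (0 : ℝ) 1 ∧ r + s = t := by
  refine ⟨t - min (t / 2) (1 / 2), min (t / 2) (1 / 2), ?_, ⟨by positivity, ?_⟩, by ring⟩
  · linarith [min_le_left (t / 2) (1 / 2)]
  · linarith [min_le_right (t / 2) (1 / 2 : ℝ)]

lemma hasDerivAt_U (k : ℕ) {f : M → ℝ} (hf : Measurable f) {A : ℝ} (hA : ∀ y, |f y| ≤ A)
    {t : ℝ} (ht : 0 < t) (x : M) :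
    HasDerivAt (fun r => H.U k r f x) (H.U (k + 1) t f x) t := by
  obtain ⟨r, s, hr, hs, rfl⟩ := exists_split ht
  have h1 := H.hasDerivAt_W k (H.measurable_S hr hf) (H.abs_S_le hr hA) hs x
  rw [H.U_eq_W (k + 1) hf hA hr hs x]
  have h2 : HasDerivAt (fun s => H.U k (r + s) f x) (H.W (k + 1) s (H.S r f) x) s := by
    refine h1.congr_of_eventuallyEq ?_
    filter_upwards [isOpen_Ioo.mem_nhds hs] with q hq using H.U_eq_W k hf hA hr hq x
  have h3 := HasDerivAt.comp_sub_const (x := r + s) (a := r)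
    (f := fun s => H.U k (r + s) f x) (f' := H.W (k + 1) s (H.S r f) x) (by simpa using h2)
  simpa using h3

lemma measurable_U (k : ℕ) {f : M → ℝ} (hf : Measurable f) {A : ℝ} (hA : ∀ y, |f y| ≤ A)
    {t : ℝ} (ht : 0 < t) : Measurable (H.U k t f) := by
  obtain ⟨r, s, hr, hs, rfl⟩ := exists_split ht
  have : H.U k (r + s) f = H.W k s (H.S r f) := by ext x; exact H.U_eq_W k hf hA hr hs x
  rw [this]
  exact H.measurable_W k hs.1 (H.measurable_S hr hf)

lemma U_locally_bounded (k : ℕ) {f : M → ℝ} (hf : Measurable f) {A : ℝ} (hA : ∀ y, |f y| ≤ A)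
    {t : ℝ} (ht : 0 < t) : ∃ I ∈ nhds t, ∃ K, (∀ q ∈ I, 0 < q) ∧
      ∀ q ∈ I, ∀ x, |H.U k q f x| ≤ K := by
  obtain ⟨r, s, hr, hs, rfl⟩ := exists_split ht
  obtain ⟨K, hK, h⟩ := H.W_bound k (δ := s / 2) (by linarith [hs.1])
  refine ⟨Ioo (r + s / 2) (r + 1), Ioo_mem_nhds (by linarith [hs.1]) (by linarith [hs.2]),
    K * A, fun q hq => by linarith [hq.1, hs.1], fun q hq x => ?_⟩
  have h1 := H.U_eq_W k hf hA hr (s := q - r)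
    ⟨by linarith [hq.1, hs.1], by linarith [hq.2]⟩ x
  rw [add_sub_cancel] at h1
  rw [h1]
  exact h _ A (H.abs_S_le hr hA) _ (by linarith [hq.1]) (by linarith [hq.2]) x

lemma hasDerivAt_S_U (k : ℕ) {f : M → ℝ} (hf : Measurable f) {A : ℝ} (hA : ∀ y, |f y| ≤ A)
    {s t : ℝ} (hs : 0 < s) (ht : 0 < t) (x : M) :
    HasDerivAt (fun r => H.S s (H.U k r f) x) (H.S s (H.U (k + 1) t f) x) t := by
  obtain ⟨I, hI, K, hpos, hK⟩ := H.U_locally_bounded (k + 1) hf hA ht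
  obtain ⟨I', hI', K', hpos', hK'⟩ := H.U_locally_bounded k hf hA ht
  have hmeas : ∀ k r, 0 < r → AEStronglyMeasurable (fun y => H.p s x y * H.U k r f y) H.μ :=
    fun k r hr => (H.integrable_p hs x).aestronglyMeasurable.mul
      (H.measurable_U k hf hA hr).aestronglyMeasurable
  refine (hasDerivAt_integral_of_dominated_loc_of_deriv_le (μ := H.μ)
    (F := fun r y => H.p s x y * H.U k r f y) (F' := fun r y => H.p s x y * H.U (k + 1) r f y)
    (s := I) (bound := fun y => H.p s x y * K)
    hI ?_ ?_ (hmeas _ _ ht) ?_ ((H.integrable_p hs x).mul_const K) ?_).2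
  · filter_upwards [Ioi_mem_nhds ht] with r hr using hmeas k r hr
  · exact H.integrable_p_mul hs x (H.measurable_U k hf hA ht) (hK' t (mem_of_mem_nhds hI'))
  · filter_upwards with y r hr
    rw [norm_mul, Real.norm_eq_abs, Real.norm_eq_abs, abs_of_nonneg (H.p_nonneg s hs x y)]
    exact mul_le_mul_of_nonneg_left (hK r hr y) (H.p_nonneg s hs x y)
  · filter_upwards with y r hr
    exact (H.hasDerivAt_U k hf hA (hpos r hr) y).const_mul _

lemma U_add (k : ℕ) {f : M → ℝ} (hf : Measurable f) {A : ℝ} (hA : ∀ y, |f y| ≤ A)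
    {s r : ℝ} (hs : 0 < s) (hr : 0 < r) (x : M) :
    H.U k (s + r) f x = H.S s (H.U k r f) x := by
  have h1 := hk_iter_eq (v := fun r => H.S (s + r) f x) (w := fun k r => H.S s (H.U k r f) x)
    (I := Ioi (0 : ℝ)) isOpen_Ioi
    (fun r hr => by
      show _ = H.S s (H.U 0 r f) x
      have : H.U 0 r f = H.S r f := by ext y; simp [U]
      rw [this, H.S_add hs hr hf hA])
    (fun k r hr => H.hasDerivAt_S_U k hf hA hs hr x) k r hr
  rw [← h1]
  have := congrFun (iteratedDeriv_comp_const_add k (fun s => H.S s f x) s) r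
  exact this.symm

/-- Higher derivatives factor through lower ones. -/
lemma U_factor (k m : ℕ) {f : M → ℝ} (hf : Measurable f) {A : ℝ} (hA : ∀ y, |f y| ≤ A)
    {s r : ℝ} (hs : s ∈ Ioo (0 : ℝ) 1) (hr : 0 < r) (x : M) :
    H.U (k + m) (s + r) f x = H.W m s (H.U k r f) x := by
  obtain ⟨I', hI', K', hpos', hK'⟩ := H.U_locally_bounded k hf hA hr
  have hb := hK' r (mem_of_mem_nhds hI')
  have hm := H.measurable_U k hf hA hr
  induction m generalizing s with
  | zero => rw [W_zero, add_zero, H.U_add k hf hA hs.1 hr]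
  | succ m ih =>
    have h1 := H.hasDerivAt_W m hm hb hs x
    have h2 : HasDerivAt (fun q => H.U (k + m) (q + r) f x) (H.U (k + m + 1) (s + r) f x) s :=
      (H.hasDerivAt_U (k + m) hf hA (add_pos hs.1 hr) x).comp_add_const s r
    refine h2.unique (h1.congr_of_eventuallyEq ?_)
    filter_upwards [isOpen_Ioo.mem_nhds hs] with q hq using ih hq

end HeatKernelSetup

lemma hk_abs_le_of_supNorm {M : Type*} {g : M → ℝ} {N : ℝ≥0∞} (hN : N ≠ ⊤) (h : supNorm g ≤ N)
    (x : M) : |g x| ≤ N.toReal := by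
  have h1 : (‖g x‖₊ : ℝ≥0∞) ≤ N := (le_iSup (fun x => (‖g x‖₊ : ℝ≥0∞)) x).trans h
  have := ENNReal.toReal_mono hN h1
  simpa using this

lemma hk_derivs {M : Type*} [MeasurableSpace M] [MetricSpace M] (H : HeatKernelSetup M)
    (σ : ℝ) (a' k : ℕ) : ∃ C, 0 ≤ C ∧ ∀ f : M → ℝ, Measurable f → supNorm f < ⊤ →
      H.CNorm a' σ f ≠ ⊤ → ∀ x, |H.U k 1 f x| ≤ C * (H.CNorm a' σ f).toReal := by
  obtain ⟨L, hL, hLan⟩ := hk_landau a'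
  obtain ⟨K, hK, hWb⟩ := H.W_bound (k - a') (δ := 1 / 2) (by norm_num)
  set c : ℝ := ((1 / 2 : ℝ) ^ (-σ / 2))⁻¹ * 2 ^ a' with hc
  have hcp : 0 < c := by positivity
  refine ⟨L * (1 + c) + K * c, by positivity, fun f hf hfs hN x => ?_⟩
  obtain ⟨A, hA⟩ : ∃ A, ∀ y, |f y| ≤ A := ⟨_, hk_abs_le_of_supNorm hfs.ne le_rfl⟩
  set N := (H.CNorm a' σ f).toReal with hNdef
  have hN0 : 0 ≤ N := ENNReal.toReal_nonneg
  have h1 : ∀ y, |H.S 1 f y| ≤ N := hk_abs_le_of_supNorm hN (by unfold HeatKernelSetup.CNorm; exact le_self_add)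
  have h2 : ∀ y, |H.U a' (1 / 2) f y| ≤ c * N := by
    intro y
    have h3 : ENNReal.ofReal ((1 / 2 : ℝ) ^ (-σ / 2)) * supNorm (H.Q a' (1 / 2) f) ≤
        H.CNorm a' σ f := by
      unfold HeatKernelSetup.CNorm
      refine le_trans ?_ le_add_self
      exact le_iSup₂ (f := fun (t : ℝ) (_ : t ∈ Set.Ioc (0 : ℝ) 1) =>
        ENNReal.ofReal (t ^ (-σ / 2)) * supNorm (H.Q a' t f)) (1 / 2) ⟨by norm_num, by norm_num⟩
    have h4 : ENNReal.ofReal ((1 / 2 : ℝ) ^ (-σ / 2)) * (‖H.Q a' (1 / 2) f y‖₊ : ℝ≥0∞) ≤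
        H.CNorm a' σ f := by
      refine le_trans ?_ h3
      gcongr
      exact le_iSup (fun x => (‖H.Q a' (1 / 2) f x‖₊ : ℝ≥0∞)) y
    have h5 := ENNReal.toReal_mono hN h4
    rw [ENNReal.toReal_mul, ENNReal.toReal_ofReal (by positivity)] at h5
    have h6 : |H.Q a' (1 / 2) f y| = (1 / 2) ^ a' * |H.U a' (1 / 2) f y| := by
      unfold HeatKernelSetup.Q HeatKernelSetup.U
      rw [abs_mul, abs_mul, abs_pow, abs_neg, abs_one, one_pow, one_mul, abs_of_pos (by positivity)]
    have h7 : (1 / 2 : ℝ) ^ (-σ / 2) * ((1 / 2) ^ a' * |H.U a' (1 / 2) f y|) ≤ N := by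
      rw [← h6]
      simpa using h5
    have hp : (0 : ℝ) < (1 / 2 : ℝ) ^ (-σ / 2) := by positivity
    have h8 : |H.U a' (1 / 2) f y| =
        c * ((1 / 2 : ℝ) ^ (-σ / 2) * ((1 / 2) ^ a' * |H.U a' (1 / 2) f y|)) := by
      rw [hc, one_div, inv_pow]
      have : ((2 : ℝ)⁻¹ ^ (-σ / 2)) ≠ 0 := by rw [one_div] at hp; exact hp.ne'
      field_simp
    rw [h8]
    gcongr
  rcases le_total k a' with hk | hk
  · have h9 := hLan (fun s => H.S s f x) N (c * N) hN0 (by positivity)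
      (fun k t ht => (H.hasDerivAt_U k hf hA ht x).differentiableAt) ?_ ?_ k hk 1 ⟨le_rfl, by norm_num⟩
    · refine h9.trans ?_
      have : 0 ≤ K * c * N := by positivity
      nlinarith
    · intro t ht
      rcases eq_or_lt_of_le ht.1 with rfl | ht1
      · exact h1 x
      · have := H.S_add (s := t - 1) (t := 1) (by linarith) one_pos hf hA x
        rw [sub_add_cancel] at this
        show |H.S t f x| ≤ N
        rw [this]
        exact H.abs_S_le (by linarith) h1 x
    · intro t ht
      have := H.U_add a' hf hA (s := t - 1 / 2) (r := 1 / 2) (by linarith [ht.1]) (by norm_num) x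
      rw [sub_add_cancel] at this
      show |H.U a' t f x| ≤ c * N
      rw [this]
      exact H.abs_S_le (by linarith [ht.1]) h2 x
  · have := H.U_factor a' (k - a') hf hA (s := 1 / 2) (r := 1 / 2)
      ⟨by norm_num, by norm_num⟩ (by norm_num) x
    rw [Nat.add_sub_cancel' hk, add_halves] at this
    rw [this]
    refine (hWb _ _ h2 (1 / 2) le_rfl (by norm_num) x).trans ?_
    have : 0 ≤ L * (1 + c) * N := by positivity
    nlinarith

/-- **Proposition 2.7.** For `σ < 2` and integers `a, a' ≥ 1`, the low-frequency
operator `P_1^{(a)}` is bounded from `C^σ` to `L^∞`: `‖P_1^{(a)} f‖_∞ ≤ C ‖f‖_{C^σ,(a')}`. -/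
theorem low_frequency_bounded_on_holder
    {M : Type*} [MeasurableSpace M] [MetricSpace M] (H : HeatKernelSetup M)
    (σ : ℝ) (hσ : σ < 2) (a a' : ℕ) (ha : 1 ≤ a) (ha' : 1 ≤ a') :
    ∃ C, 0 < C ∧ ∀ f : M → ℝ, Measurable f → supNorm f < ⊤ →
      supNorm (H.P a 1 f) ≤ ENNReal.ofReal C * H.CNorm a' σ f := by
  choose C hC h using fun k => hk_derivs H σ a' k
  refine ⟨1 + ∑ k ∈ Finset.range a, C k, ?_, fun f hf hfs => ?_⟩
  · have := Finset.sum_nonneg (s := Finset.range a) (fun k _ => hC k)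
    linarith
  have hpos : 0 ≤ ∑ k ∈ Finset.range a, C k := Finset.sum_nonneg (fun k _ => hC k)
  by_cases hN : H.CNorm a' σ f = ⊤
  · rw [hN, ENNReal.mul_top (by simp; linarith)]
    exact le_top
  refine iSup_le fun x => ?_
  have hb : |H.P a 1 f x| ≤ (1 + ∑ k ∈ Finset.range a, C k) * (H.CNorm a' σ f).toReal := by
    have hN0 : 0 ≤ (H.CNorm a' σ f).toReal := ENNReal.toReal_nonneg
    have h1 : |H.P a 1 f x| ≤ ∑ k ∈ Finset.range a, C k * (H.CNorm a' σ f).toReal := by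
      unfold HeatKernelSetup.P
      refine (Finset.abs_sum_le_sum_abs _ _).trans (Finset.sum_le_sum fun k _ => ?_)
      have h2 := h k f hf hfs hN x
      unfold HeatKernelSetup.U at h2
      rw [abs_mul, one_pow, mul_one, abs_mul, abs_pow, abs_neg, abs_one, one_pow, mul_one]
      have h3 : |((Nat.factorial k : ℝ))⁻¹| ≤ 1 := by
        rw [abs_of_nonneg (by positivity)]
        exact inv_le_one_of_one_le₀ (by exact_mod_cast Nat.factorial_pos k)
      refine le_trans ?_ h2
      exact mul_le_of_le_one_left (abs_nonneg _) h3
    rw [← Finset.sum_mul] at h1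
    linarith
  rw [← ENNReal.ofReal_toReal hN, ← ENNReal.ofReal_mul (by linarith)]
  change ‖H.P a 1 f x‖ₑ ≤ _
  rw [← ofReal_norm]
  exact ENNReal.ofReal_le_ofReal hb
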